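/- Let n be a nonzero integer and α ∈ ℂ with α ≠ 2 and α ≠ −2. Let P ∈ ℂ[s,t,u] be the polynomial P = 2 + φ_{|n|}(s)²·(s² + t² + u² − s·t·u − 4) (the trace polynomial of the word [xⁿ,y]). Then P − α is an irreducible polynomial in ℂ[s,t,u], and the fraction field of the quotient ring ℂ[s,t,u]/(P − α) is isomorphic as a ℂ-algebra to the fraction field of the polynomial ring ℂ[X,Y] in two variables (i.e., the trace surface {P = α} is a rational surface). -/

import Mathlib

open MvPolynomial

/-- `φ_k`, the Dickson polynomial of the second kind `E_{k-1}(X,1)`: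
`φ_1 = 1`, `φ_2 = X`, `φ_{k+1} = X·φ_k − φ_{k−1}`. -/
noncomputable def phi (k : ℕ) : Polynomial ℂ := Polynomial.dickson 2 (1 : ℂ) (k - 1)

/-!
Let `q = φ_k` and `p = φ_{k-1}`. Over the field of rational functions of `s`, the surface `P = α`
is the conic `t² - stu + u² = 4 - s² + (α - 2)/q²`. Its left-hand side factors as
`(t - au)(t - a⁻¹u)` with `a² - sa + 1 = 0`, which no rational function `a` of `s` satisfies;
irreducibility follows by Gauss's lemma.

Write `α = ε² + ε⁻²`. On the line `u = ε + ε⁻¹` one has `u² - 4 = (ε - ε⁻¹)² = α - 2`, so the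
discriminant of the conic in `t` is `(ε - ε⁻¹)²((s² - 4)q² + 4)/q²`. Since `p² - spq + q² = 1`, it
is the square of `(ε - ε⁻¹)(2p - sq)/q`, and the conic has the point
`(t, u) = (εs + (ε⁻¹ - ε)p/q, ε + ε⁻¹)` with coordinates rational in `s`. The slope `m` of
the chord through this point then parametrizes the conic, so the function field is generated by `s`
and `m`. As it has transcendence degree two, `s` and `m` are algebraically independent.
-/

open scoped Polynomial IntermediateField

section FunctionField

variable {F : Type*} [Field F]

theorem nonempty_algEquiv_fractionRing_mvPolynomial {L ι : Type*} [Field L] [Algebra F L]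
    [Finite ι] {x y : ι → L} (hx : IntermediateField.adjoin F (Set.range x) = ⊤)
    (hy : AlgebraicIndependent F y) : Nonempty (L ≃ₐ[F] FractionRing (MvPolynomial ι F)) := by
  have : Algebra.IsAlgebraic (Algebra.adjoin F (Set.range x)) L := by
    rw [← IntermediateField.isAlgebraic_adjoin_iff_top, hx]
    exact ⟨fun a ↦ isAlgebraic_algebraMap (⟨a, trivial⟩ : (⊤ : IntermediateField F L))⟩
  have hbasis : IsTranscendenceBasis F x :=
    Algebra.IsAlgebraic.isTranscendenceBasis_of_lift_le_trdeg_of_finite F x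
      hy.lift_cardinalMk_le_trdeg
  exact ⟨(hbasis.1.aevalEquivField.trans
    ((IntermediateField.equivOfEq hx).trans IntermediateField.topEquiv)).symm⟩

variable {σ : Type*}

/-- The generic zero of an ideal `I` of polynomials: the tuple of residue classes of the variables,
in the fraction ring of the coordinate ring of `I`. -/
noncomputable def genericZero (I : Ideal (MvPolynomial σ F)) (i : σ) :
    FractionRing (MvPolynomial σ F ⧸ I) :=
  algebraMap (MvPolynomial σ F ⧸ I) _ (Ideal.Quotient.mk I (X i))

theorem aeval_genericZero (I : Ideal (MvPolynomial σ F)) (f : MvPolynomial σ F) :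
    aeval (genericZero I) f = algebraMap (MvPolynomial σ F ⧸ I) _ (Ideal.Quotient.mk I f) := by
  have h : aeval (genericZero I) = (IsScalarTower.toAlgHom F (MvPolynomial σ F ⧸ I)
      (FractionRing (MvPolynomial σ F ⧸ I))).comp (Ideal.Quotient.mkₐ F I) :=
    algHom_ext fun i ↦ by simp [genericZero]
  exact congr($h f)

theorem aeval_genericZero_eq_zero_iff {I : Ideal (MvPolynomial σ F)} {f : MvPolynomial σ F} :
    aeval (genericZero I) f = 0 ↔ f ∈ I := by
  rw [aeval_genericZero, FaithfulSMul.algebraMap_eq_zero_iff, Ideal.Quotient.eq_zero_iff_mem]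

theorem adjoin_range_genericZero (I : Ideal (MvPolynomial σ F)) [I.IsPrime] :
    IntermediateField.adjoin F (Set.range (genericZero I)) = ⊤ := by
  have hrange : (IsScalarTower.toAlgHom F (MvPolynomial σ F ⧸ I)
      (FractionRing (MvPolynomial σ F ⧸ I))).range =
        Algebra.adjoin F (Set.range (genericZero I)) := by
    ext y
    simp only [Algebra.adjoin_range_eq_range_aeval, AlgHom.mem_range, aeval_genericZero]
    exact Ideal.Quotient.mk_surjective.exists
  exact (IsFractionRing.algHom_fieldRange_eq_of_comp_eq_of_range_eq
    (f := AlgHom.id F _) rfl hrange).symm.trans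
      (AlgHom.fieldRange_eq_top.mpr Function.surjective_id)

end FunctionField

section Conic

theorem mem_and_mem_of_chord_mem {L S : Type*} [Field L] [SetLike S L] [SubfieldClass S L] {E : S}
    {s t u t₀ u₀ m : L} (hs : s ∈ E) (ht₀ : t₀ ∈ E) (hu₀ : u₀ ∈ E) (hm : m ∈ E)
    (hchord : t - t₀ = m * (u - u₀)) (hu : u ≠ u₀)
    (hconic : t ^ 2 - s * t * u + u ^ 2 = t₀ ^ 2 - s * t₀ * u₀ + u₀ ^ 2)
    (hs₄ : s ^ 2 - 4 ≠ 0) (h₀ : t₀ ^ 2 - s * t₀ * u₀ + u₀ ^ 2 ≠ 0) : t ∈ E ∧ u ∈ E := by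
  have hline : (u - u₀) * (m ^ 2 - s * m + 1) = (s * u₀ - 2 * t₀) * m + (s * t₀ - 2 * u₀) := by
    apply mul_left_cancel₀ (sub_ne_zero.mpr hu)
    linear_combination hconic - (t + t₀ + m * (u - u₀) - s * u) * hchord
  -- A common root of both sides, as polynomials in `m`, would force `h₀` or `hs₄` to fail:
  -- up to sign, their resultant is `(s² - 4)(t₀² - st₀u₀ + u₀²)`.
  have hm₀ : m ^ 2 - s * m + 1 ≠ 0 := fun hm₀ ↦ by
    have htangent : (s * u₀ - 2 * t₀) * m + (s * t₀ - 2 * u₀) = 0 := by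
      rw [← hline, hm₀, mul_zero]
    refine mul_ne_zero hs₄ h₀ ?_
    linear_combination (-(s * u₀ - 2 * t₀) ^ 2) * hm₀ +
      ((s * u₀ - 2 * t₀) * m - (s * t₀ - 2 * u₀) - s * (s * u₀ - 2 * t₀)) * htangent
  have h₂ : (2 : L) ∈ E := ofNat_mem E 2
  have hu_mem : u ∈ E := by
    rw [show u = u₀ + ((s * u₀ - 2 * t₀) * m + (s * t₀ - 2 * u₀)) / (m ^ 2 - s * m + 1) by
      rw [← hline, mul_div_cancel_right₀ _ hm₀, add_sub_cancel]]
    refine add_mem hu₀ (div_mem ?_ ?_)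
    · exact add_mem (mul_mem (sub_mem (mul_mem hs hu₀) (mul_mem h₂ ht₀)) hm)
        (sub_mem (mul_mem hs ht₀) (mul_mem h₂ hu₀))
    · exact add_mem (sub_mem (pow_mem hm 2) (mul_mem hs hm)) (one_mem E)
  refine ⟨?_, hu_mem⟩
  rw [← sub_add_cancel t t₀, hchord]
  exact add_mem (mul_mem hm (sub_mem hu_mem hu₀)) ht₀

variable {F L : Type*} [Field F] [Field L] [Algebra F L] {s : L}

theorem exists_adjoin_pair_eq_top_of_conic {t u t₀ u₀ : L}
    (htop : IntermediateField.adjoin F {s, t, u} = ⊤) (ht₀ : t₀ ∈ F⟮s⟯) (hu₀ : u₀ ∈ F⟮s⟯)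
    (hu : u ≠ u₀) (hconic : t ^ 2 - s * t * u + u ^ 2 = t₀ ^ 2 - s * t₀ * u₀ + u₀ ^ 2)
    (hs₄ : s ^ 2 - 4 ≠ 0) (h₀ : t₀ ^ 2 - s * t₀ * u₀ + u₀ ^ 2 ≠ 0) :
    ∃ m : L, IntermediateField.adjoin F {s, m} = ⊤ := by
  let m := (t - t₀) / (u - u₀)
  have hs : s ∈ F⟮s, m⟯ := IntermediateField.subset_adjoin F _ (Set.mem_insert s {m})
  have hm : m ∈ F⟮s, m⟯ := IntermediateField.subset_adjoin F _ (Set.mem_insert_of_mem s rfl)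
  have hle : F⟮s⟯ ≤ F⟮s, m⟯ := IntermediateField.adjoin_simple_le_iff.mpr hs
  obtain ⟨ht, hu⟩ := mem_and_mem_of_chord_mem hs (hle ht₀) (hle hu₀) hm
    (div_mul_cancel₀ _ (sub_ne_zero.mpr hu)).symm hu hconic hs₄ h₀
  refine ⟨m, top_le_iff.mp (htop ▸ IntermediateField.adjoin_le_iff.mpr ?_)⟩
  rintro _ (rfl | rfl | rfl) <;> assumption

theorem exists_mem_adjoin_conic_eq {p q : F[X]}
    (hpq : p ^ 2 + q ^ 2 - Polynomial.X * p * q = 1) (hq : Polynomial.aeval s q ≠ 0)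
    {ε : F} (hε : ε ≠ 0) :
    ∃ t₀ ∈ F⟮s⟯,
      t₀ ^ 2 - s * t₀ * algebraMap F L (ε + ε⁻¹) + algebraMap F L (ε + ε⁻¹) ^ 2 =
        4 - s ^ 2 + algebraMap F L (ε ^ 2 + ε⁻¹ ^ 2 - 2) / Polynomial.aeval s q ^ 2 := by
  have hs : s ∈ F⟮s⟯ := IntermediateField.mem_adjoin_simple_self F s
  have haeval (f : F[X]) : Polynomial.aeval s f ∈ F⟮s⟯ :=
    IntermediateField.algebra_adjoin_le_adjoin F _ (Polynomial.aeval_mem_adjoin_singleton F s)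
  refine ⟨algebraMap F L ε * s +
    algebraMap F L (ε⁻¹ - ε) * Polynomial.aeval s p / Polynomial.aeval s q, ?_, ?_⟩
  · exact add_mem (mul_mem (algebraMap_mem _ ε) hs)
      (div_mem (mul_mem (algebraMap_mem _ _) (haeval p)) (haeval q))
  · have hε' : algebraMap F L ε ≠ 0 := (map_ne_zero (algebraMap F L)).mpr hε
    have hpq' : Polynomial.aeval s p ^ 2 + Polynomial.aeval s q ^ 2 -
        s * Polynomial.aeval s p * Polynomial.aeval s q = 1 := by
      simpa using congr(Polynomial.aeval s $hpq)
    simp only [map_add, map_sub, map_pow, map_inv₀, map_ofNat]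
    field_simp
    linear_combination (1 - algebraMap F L ε ^ 2) ^ 2 * hpq'

theorem four_sub_sq_add_div_aeval_sq_ne_zero (hs : Transcendental F s) {q : F[X]} (hq : q ≠ 0)
    {c : F} (hc : c ≠ 0) :
    4 - s ^ 2 + algebraMap F L c / Polynomial.aeval s q ^ 2 ≠ 0 := by
  have hqs : Polynomial.aeval s q ≠ 0 := fun h ↦ hq (transcendental_iff.mp hs q h)
  intro h
  have hpoly : q ^ 2 * (4 - Polynomial.X ^ 2) + Polynomial.C c = 0 := by
    apply transcendental_iff.mp hs
    simp only [map_add, map_mul, map_pow, map_sub, map_ofNat, Polynomial.aeval_X,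
      Polynomial.aeval_C]
    field_simp at h
    linear_combination h
  have heval : (q.eval 2) ^ 2 * (4 - 2 ^ 2) + c = 0 := by
    simpa using congr(Polynomial.eval 2 $hpoly)
  exact hc (by linear_combination heval)

end Conic

section ConicPolynomial

/-- The polynomial `a(t² - stu + u²) + d`, where `t` is the outer and `u` the inner variable. -/
noncomputable def conicPolynomial {R : Type*} [CommRing R] (s a d : R) : R[X][X] :=
  Polynomial.C (Polynomial.C a) * (Polynomial.X ^ 2 -
    Polynomial.C (Polynomial.C s * Polynomial.X) * Polynomial.X +
      Polynomial.C (Polynomial.X ^ 2)) + Polynomial.C (Polynomial.C d)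

variable {R : Type*} [CommRing R] {s a d : R}

theorem coeff_zero_conicPolynomial :
    (conicPolynomial s a d).coeff 0 =
      Polynomial.C a * Polynomial.X ^ 2 + Polynomial.C d := by
  simp [conicPolynomial, -map_pow]

theorem coeff_two_conicPolynomial : (conicPolynomial s a d).coeff 2 = Polynomial.C a := by
  simp [conicPolynomial, -map_pow]

theorem natDegree_conicPolynomial (ha : a ≠ 0) : (conicPolynomial s a d).natDegree = 2 := by
  rw [conicPolynomial]
  compute_degree!

theorem irreducible_conicPolynomial_one {K : Type*} [Field K] {s : K} (d : K)
    (hs : ∀ x : K, x ^ 2 - s * x + 1 ≠ 0) : Irreducible (conicPolynomial s 1 d) := by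
  have hdeg : (conicPolynomial s 1 d).natDegree = 2 := natDegree_conicPolynomial one_ne_zero
  have hmonic : (conicPolynomial s 1 d).Monic := by
    rw [Polynomial.Monic, Polynomial.leadingCoeff, hdeg, coeff_two_conicPolynomial, map_one]
  rw [hmonic.irreducible_iff_roots_eq_zero_of_degree_le_three hdeg.ge (by omega),
    Multiset.eq_zero_iff_forall_notMem]
  intro r hr
  have hroot : r ^ 2 - Polynomial.C s * Polynomial.X * r + Polynomial.X ^ 2 +
      Polynomial.C d = 0 := by
    simpa [conicPolynomial] using (Polynomial.mem_roots'.mp hr).2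
  have hr_deg : r.natDegree ≤ 1 := by
    by_contra! h
    have hlow : (Polynomial.C s * Polynomial.X * r -
        (Polynomial.X ^ 2 + Polynomial.C d)).natDegree ≤ r.natDegree + 1 := by
      compute_degree
      omega
    rw [show _ - _ = r ^ 2 by linear_combination -hroot, Polynomial.natDegree_pow] at hlow
    omega
  obtain ⟨x, y, rfl⟩ := Polynomial.exists_eq_X_add_C_of_natDegree_le_one hr_deg
  have hquad : Polynomial.C (x ^ 2 - s * x + 1) * Polynomial.X ^ 2 +
      Polynomial.C (2 * x * y - s * y) * Polynomial.X + Polynomial.C (y ^ 2 + d) = 0 := by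
    simp only [map_add, map_sub, map_mul, map_pow, map_one, map_ofNat]
    linear_combination hroot
  apply hs x
  simpa only [Polynomial.coeff_add, Polynomial.coeff_C_mul, Polynomial.coeff_X_pow_self,
    Polynomial.coeff_X_of_ne_one (n := 2) (by decide), Polynomial.coeff_C_succ, mul_one, mul_zero,
    add_zero, Polynomial.coeff_zero] using congr(Polynomial.coeff $hquad 2)

theorem isPrimitive_conicPolynomial [IsDomain R] (ha : a ≠ 0) (had : IsRelPrime a d) :
    (conicPolynomial s a d).IsPrimitive := by
  intro r hr
  rw [Polynomial.C_dvd_iff_dvd_coeff] at hr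
  have hra : r ∣ Polynomial.C a := coeff_two_conicPolynomial (s := s) (d := d) ▸ hr 2
  have hrd : r ∣ Polynomial.C d :=
    (dvd_add_right (hra.mul_right (Polynomial.X ^ 2))).mp
      (coeff_zero_conicPolynomial (s := s) (a := a) ▸ hr 0)
  have hr_deg : r.natDegree ≤ 0 := by
    simpa using Polynomial.natDegree_le_of_dvd hra (Polynomial.C_ne_zero.mpr ha)
  obtain ⟨c, rfl⟩ : ∃ c, Polynomial.C c = r :=
    ⟨_, (Polynomial.eq_C_of_natDegree_le_zero hr_deg).symm⟩
  rw [Polynomial.C_dvd_iff_dvd_coeff] at hra hrd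
  exact (had (by simpa using hra 0) (by simpa using hrd 0)).map Polynomial.C

theorem irreducible_conicPolynomial [IsDomain R] {K : Type*} [Field K] {f : R →+* K}
    (hf : Function.Injective f) (ha : a ≠ 0) (had : IsRelPrime a d)
    (hs : ∀ x : K, x ^ 2 - f s * x + 1 ≠ 0) : Irreducible (conicPolynomial s a d) := by
  refine (isPrimitive_conicPolynomial ha had).irreducible_of_irreducible_map_of_injective
    (φ := Polynomial.mapRingHom f) (Polynomial.map_injective f hf) ?_
  have hfa : f a ≠ 0 := (map_ne_zero_iff f hf).mpr ha
  have hunit : IsUnit (Polynomial.C (Polynomial.C (f a))) :=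
    (hfa.isUnit.map Polynomial.C).map Polynomial.C
  convert (irreducible_isUnit_mul hunit).mpr
    (irreducible_conicPolynomial_one (f d / f a) hs) using 1
  have hd : Polynomial.C (Polynomial.C (f d)) =
      Polynomial.C (Polynomial.C (f a)) * Polynomial.C (Polynomial.C (f d / f a)) := by
    simp only [← map_mul, mul_div_cancel₀ _ hfa]
  simp only [conicPolynomial, Polynomial.map_add, Polynomial.map_sub, Polynomial.map_mul,
    Polynomial.map_pow, Polynomial.map_X, Polynomial.map_C, Polynomial.coe_mapRingHom, map_one, hd]
  ring

theorem sq_sub_X_mul_add_one_ne_zero {F K : Type*} [Field F] [Field K] [Algebra F[X] K]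
    [IsFractionRing F[X] K] (x : K) : x ^ 2 - algebraMap F[X] K Polynomial.X * x + 1 ≠ 0 := by
  intro h
  have hint : IsIntegral F[X] x :=
    ⟨Polynomial.X ^ 2 - Polynomial.C Polynomial.X * Polynomial.X + 1, by monicity!,
      by simpa using h⟩
  obtain ⟨r, rfl⟩ := IsIntegrallyClosed.isIntegral_iff.mp hint
  have hr : r * (Polynomial.X - r) = 1 := by
    apply IsFractionRing.injective F[X] K
    simp only [map_mul, map_sub, map_one]
    linear_combination -h
  have hdeg₁ := Polynomial.degree_eq_zero_of_isUnit (.of_mul_eq_one _ hr)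
  have hdeg₂ := Polynomial.degree_eq_zero_of_isUnit (.of_mul_eq_one_right _ hr)
  have hdeg := Polynomial.degree_add_le r (Polynomial.X - r)
  rw [add_sub_cancel, hdeg₁, hdeg₂, Polynomial.degree_X] at hdeg
  exact absurd hdeg (by decide)

end ConicPolynomial

section TraceSurface

variable {F : Type*} [Field F]

/-- The equation `2 + q(s)²(s² + t² + u² - stu - 4) - α` of a surface in affine 3-space, with
`X 0`, `X 1`, `X 2` standing for `s`, `t`, `u`. For `q = φ_k` its zeros are the trace triples of
pairs of matrices in `SL₂` on which the word `[xᵏ, y]` has trace `α`. -/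
noncomputable def traceSurface (q : F[X]) (α : F) : MvPolynomial (Fin 3) F :=
  C 2 + (Polynomial.aeval (X 0) q) ^ 2 *
    (X 0 ^ 2 + X 1 ^ 2 + X 2 ^ 2 - X 0 * X 1 * X 2 - 4) - C α

theorem aeval_traceSurface {A : Type*} [CommRing A] [Algebra F A] (s t u : A) (q : F[X]) (α : F) :
    aeval ![s, t, u] (traceSurface q α) = 2 + Polynomial.aeval s q ^ 2 *
      (s ^ 2 + t ^ 2 + u ^ 2 - s * t * u - 4) - algebraMap F A α := by
  simp [traceSurface, ← Polynomial.aeval_algHom_apply, map_ofNat (algebraMap F A)]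

variable (F) in
/-- The identification of `F[s, t, u]` with `F[s][u][t]`; the order makes `s` a coefficient and `t`
the variable in which `traceSurface` is a `conicPolynomial`. -/
noncomputable def toIterated : MvPolynomial (Fin 3) F →ₐ[F] F[X][X][X] :=
  aeval ![Polynomial.C (Polynomial.C (Polynomial.X : F[X])), Polynomial.X,
    Polynomial.C Polynomial.X]

variable (F) in
/-- The inverse of `toIterated`. -/
noncomputable def ofIterated : F[X][X][X] →+* MvPolynomial (Fin 3) F :=
  Polynomial.eval₂RingHom (Polynomial.eval₂RingHom
    (Polynomial.aeval (X 0 : MvPolynomial (Fin 3) F)).toRingHom (X 2)) (X 1)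

theorem ofIterated_leftInverse_toIterated :
    Function.LeftInverse (ofIterated F) (toIterated F) := by
  intro f
  have h : (ofIterated F).comp (toIterated F : _ →+* F[X][X][X]) = RingHom.id _ := by
    ext i : 2
    · simp [ofIterated, toIterated]
    · fin_cases i <;> simp [ofIterated, toIterated]
  exact congr($h f)

theorem toIterated_traceSurface (q : F[X]) (α : F) :
    toIterated F (traceSurface q α) = conicPolynomial Polynomial.X (q ^ 2)
      (q ^ 2 * (Polynomial.X ^ 2 - 4) + Polynomial.C (2 - α)) := by
  have hq : Polynomial.aeval (Polynomial.C (Polynomial.C (Polynomial.X : F[X]))) q =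
      Polynomial.C (Polynomial.C q) :=
    (Polynomial.aeval_algHom_apply (Polynomial.CAlgHom.comp Polynomial.CAlgHom)
      Polynomial.X q).trans (by rw [Polynomial.aeval_X_left_apply]; rfl)
  simp only [toIterated, traceSurface, conicPolynomial, ← Polynomial.aeval_algHom_apply, map_add,
    map_sub, map_mul, map_pow, map_ofNat, aeval_X, aeval_C, Matrix.cons_val, hq,
    Polynomial.algebraMap_apply, Algebra.algebraMap_self_apply]
  ring

variable {q : F[X]} (hq : q ≠ 0) {α : F}

include hq

theorem irreducible_traceSurface (hα : α ≠ 2) : Irreducible (traceSurface q α) := by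
  have : IsLocalHom (toIterated F) :=
    isLocalHom_of_leftInverse _ ofIterated_leftInverse_toIterated
  have hrel : IsRelPrime (q ^ 2)
      (q ^ 2 * (Polynomial.X ^ 2 - 4) + Polynomial.C (2 - α)) := fun r hr hr' ↦
    isUnit_of_dvd_unit ((dvd_add_right (hr.mul_right _)).mp hr')
      ((sub_ne_zero.mpr hα.symm).isUnit.map Polynomial.C)
  refine Irreducible.of_map (f := toIterated F) ?_
  rw [toIterated_traceSurface]
  exact irreducible_conicPolynomial (IsFractionRing.injective F[X] (FractionRing F[X]))
    (pow_ne_zero 2 hq) hrel sq_sub_X_mul_add_one_ne_zero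

theorem eq_zero_of_traceSurface_dvd_rename {f : MvPolynomial (Fin 2) F}
    (hf : traceSurface q α ∣ rename ![0, 2] f) : f = 0 := by
  have hconst : toIterated F (rename ![0, 2] f) =
      Polynomial.C (aeval ![Polynomial.C (Polynomial.X : F[X]), Polynomial.X] f) := by
    change _ = Polynomial.CAlgHom.comp
      (aeval ![Polynomial.C (Polynomial.X : F[X]), Polynomial.X]) f
    rw [toIterated, aeval_rename, comp_aeval]
    congr 2
    funext i
    fin_cases i <;> rfl
  have hdeg : (toIterated F (traceSurface q α)).natDegree = 2 := by
    rw [toIterated_traceSurface, natDegree_conicPolynomial (pow_ne_zero 2 hq)]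
  have hzero := Polynomial.eq_zero_of_dvd_of_natDegree_lt (map_dvd (toIterated F) hf)
    (by rw [hconst, hdeg, Polynomial.natDegree_C]; exact two_pos)
  rwa [map_eq_zero_iff _ ofIterated_leftInverse_toIterated.injective,
    map_eq_zero_iff _ (rename_injective _ (by decide))] at hzero

theorem algebraicIndependent_genericZero_traceSurface :
    AlgebraicIndependent F ![genericZero (Ideal.span {traceSurface q α}) 0,
      genericZero (Ideal.span {traceSurface q α}) 2] := by
  rw [algebraicIndependent_iff]
  intro f hf
  apply eq_zero_of_traceSurface_dvd_rename hq (α := α)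
  rw [← Ideal.mem_span_singleton, ← aeval_genericZero_eq_zero_iff, aeval_rename, ← hf]
  congr 2
  funext i
  fin_cases i <;> rfl

theorem exists_adjoin_pair_eq_top_of_aeval_traceSurface_eq_zero {L : Type*} [Field L]
    [Algebra F L] {p : F[X]} (hpq : p ^ 2 + q ^ 2 - Polynomial.X * p * q = 1)
    {ε : F} (hε : ε ≠ 0) (hε₂ : ε ^ 2 + ε⁻¹ ^ 2 ≠ 2) {s t u : L}
    (htop : IntermediateField.adjoin F {s, t, u} = ⊤) (hs : Transcendental F s)
    (hu : Transcendental F u)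
    (hstu : aeval ![s, t, u] (traceSurface q (ε ^ 2 + ε⁻¹ ^ 2)) = 0) :
    ∃ m : L, IntermediateField.adjoin F {s, m} = ⊤ := by
  have hqs : Polynomial.aeval s q ≠ 0 := fun h ↦ hq (transcendental_iff.mp hs q h)
  have hconic : t ^ 2 - s * t * u + u ^ 2 =
      4 - s ^ 2 + algebraMap F L (ε ^ 2 + ε⁻¹ ^ 2 - 2) / Polynomial.aeval s q ^ 2 := by
    rw [aeval_traceSurface] at hstu
    rw [map_sub, map_ofNat]
    generalize algebraMap F L (ε ^ 2 + ε⁻¹ ^ 2) = a at hstu ⊢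
    field_simp
    linear_combination hstu
  have hs₄ : s ^ 2 - 4 ≠ 0 := fun h ↦
    Polynomial.X_pow_sub_C_ne_zero two_pos (4 : F)
      (transcendental_iff.mp hs _ (by simpa [map_ofNat] using h))
  have hu₀ : u ≠ algebraMap F L (ε + ε⁻¹) := fun h ↦ hu (h ▸ isAlgebraic_algebraMap _)
  obtain ⟨t₀, ht₀, hpoint⟩ := exists_mem_adjoin_conic_eq hpq hqs hε
  exact exists_adjoin_pair_eq_top_of_conic htop ht₀ (algebraMap_mem _ _) hu₀
    (hconic.trans hpoint.symm) hs₄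
    (hpoint ▸ four_sub_sq_add_div_aeval_sq_ne_zero hs hq (sub_ne_zero.mpr hε₂))

end TraceSurface

theorem degree_dickson_two_one {R : Type*} [CommRing R] [Nontrivial R] :
    ∀ n : ℕ, (Polynomial.dickson 2 (1 : R) n).degree = n
  | 0 => by simp [show (3 - 2 : R[X]) = 1 by norm_num]
  | 1 => by simp
  | n + 2 => by
    have hX : (Polynomial.X * Polynomial.dickson 2 (1 : R) (n + 1)).degree = ↑(n + 2) := by
      rw [mul_comm, Polynomial.degree_mul_X, degree_dickson_two_one (n + 1)]
      rfl
    rw [Polynomial.dickson_add_two, map_one, one_mul,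
      Polynomial.degree_sub_eq_left_of_degree_lt, hX]
    rw [hX, degree_dickson_two_one n]
    exact_mod_cast (by omega : n < n + 2)

theorem chebyshev_S_sq_add_dickson_sq {R : Type*} [CommRing R] (n : ℕ) :
    Polynomial.Chebyshev.S R (n - 1) ^ 2 + Polynomial.dickson 2 (1 : R) n ^ 2 -
      Polynomial.X * Polynomial.Chebyshev.S R (n - 1) * Polynomial.dickson 2 (1 : R) n = 1 := by
  rw [Polynomial.dickson_two_one_eq_chebyshev_S]
  simpa using Polynomial.Chebyshev.S_sq_add_S_sq R (n - 1)

theorem exists_sq_add_inv_sq_eq {F : Type*} [Field F] [IsAlgClosed F] (α : F) :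
    ∃ ε : F, ε ≠ 0 ∧ ε ^ 2 + ε⁻¹ ^ 2 = α := by
  have hdeg : (Polynomial.X ^ 4 - Polynomial.C α * Polynomial.X ^ 2 + 1 : F[X]).degree = 4 := by
    compute_degree!
  obtain ⟨ε, hroot⟩ := IsAlgClosed.exists_root _ (hdeg.trans_ne (by norm_num))
  simp only [Polynomial.IsRoot.def, Polynomial.eval_add, Polynomial.eval_sub, Polynomial.eval_pow,
    Polynomial.eval_X, Polynomial.eval_mul, Polynomial.eval_C, Polynomial.eval_one] at hroot
  have hε : ε ≠ 0 := by
    rintro rfl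
    simp at hroot
  refine ⟨ε, hε, ?_⟩
  field_simp
  linear_combination hroot

theorem trace_surface_commutator_xn_y_rational_general {F : Type*} [Field F] (n : ℕ) {ε α : F}
    (hε : ε ≠ 0) (hεα : ε ^ 2 + ε⁻¹ ^ 2 = α) (hα : α ≠ 2) :
    Irreducible (traceSurface (Polynomial.dickson 2 1 n) α) ∧
      Nonempty (FractionRing
        (MvPolynomial (Fin 3) F ⧸ Ideal.span {traceSurface (Polynomial.dickson 2 1 n) α}) ≃ₐ[F]
          FractionRing (MvPolynomial (Fin 2) F)) := by
  subst hεα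
  have hq : Polynomial.dickson 2 (1 : F) n ≠ 0 :=
    Polynomial.degree_ne_bot.mp (degree_dickson_two_one (R := F) n ▸ WithBot.coe_ne_bot)
  have hirr := irreducible_traceSurface hq hα
  set I := Ideal.span {traceSurface (Polynomial.dickson 2 (1 : F) n) (ε ^ 2 + ε⁻¹ ^ 2)}
  have : I.IsPrime := (Ideal.span_singleton_prime hirr.ne_zero).mpr hirr.prime
  have hsu : AlgebraicIndependent F ![genericZero I 0, genericZero I 2] :=
    algebraicIndependent_genericZero_traceSurface hq
  have heta : genericZero I = ![genericZero I 0, genericZero I 1, genericZero I 2] :=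
    (FinVec.etaExpand_eq _).symm
  have htop : F⟮genericZero I 0, genericZero I 1, genericZero I 2⟯ = ⊤ := by
    rw [← adjoin_range_genericZero I, heta, Matrix.range_cons, Matrix.range_cons_cons_empty,
      Set.singleton_union]
    rfl
  obtain ⟨m, hm⟩ := exists_adjoin_pair_eq_top_of_aeval_traceSurface_eq_zero hq
    (chebyshev_S_sq_add_dickson_sq n) hε hα
    (s := genericZero I 0) (t := genericZero I 1) (u := genericZero I 2)
    htop (hsu.transcendental 0) (hsu.transcendental 1)
    (heta ▸ aeval_genericZero_eq_zero_iff.mpr (Ideal.mem_span_singleton_self _))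
  refine ⟨hirr, nonempty_algEquiv_fractionRing_mvPolynomial (x := ![genericZero I 0, m]) ?_ hsu⟩
  rw [Matrix.range_cons_cons_empty, hm]

/-- for `w = [xⁿ,y]` and `α ≠ ±2` the polynomial `P − α` is irreducible
and the trace surface `{P = α}` is rational: the fraction field of
`ℂ[s,t,u]/(P − α)` is `ℂ`-isomorphic to the field of rational functions in two variables. -/
theorem trace_surface_commutator_xn_y_rational (n : ℤ) (hn : n ≠ 0)
    (α : ℂ) (hα : α ≠ 2) (hα' : α ≠ -2)
    (P : MvPolynomial (Fin 3) ℂ)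
    (hP : P = C 2 + (Polynomial.aeval (X 0 : MvPolynomial (Fin 3) ℂ) (phi n.natAbs)) ^ 2 *
        (X 0 ^ 2 + X 1 ^ 2 + X 2 ^ 2 - X 0 * X 1 * X 2 - 4)) :
    Irreducible (P - C α) ∧
      Nonempty
        (FractionRing (MvPolynomial (Fin 3) ℂ ⧸ Ideal.span {P - C α}) ≃ₐ[ℂ]
          FractionRing (MvPolynomial (Fin 2) ℂ)) := by
  obtain ⟨ε, hε, hεα⟩ := exists_sq_add_inv_sq_eq α
  subst hP
  exact trace_surface_commutator_xn_y_rational_general (n.natAbs - 1) hε hεα hα
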